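/- arXiv:1408.2653 — 3 statements merged into one kernel-verified Lean document; each statement's English description precedes it below -/
import Mathlib

section
/- Let S be a nonempty finite set of natural numbers, M a positive integer, λ ∈ ℝ^M, and let q(x) = exp(−∑_{k=1}^M λ_k x^k)/Z(λ) with Z(λ) = ∑_{x∈S} exp(−∑_{k=1}^M λ_k x^k). If g is a probability mass function on S with ∑_{x∈S} x^k g(x) = ∑_{x∈S} x^k q(x) for all k = 1, …, M and the entropies are equal, −∑_{x∈S} g(x) ln g(x) = −∑_{x∈S} q(x) ln q(x), then g(x) = q(x) for every x ∈ S. -/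
/-!
Write `q = exp (-E) / Z` with energy `E x = ∑ k, λ k * x ^ k`. Since `log q = -E - log Z`, the cross
entropy `-∑ g log q` depends on `g` only through its total mass and its mean energy, hence only
through its moments; so it equals the entropy of `q`, which is the entropy of `g`. Thus the relative
entropy `∑ g log (g / q)` vanishes, and this is the equality case of Gibbs' inequality.
-/

section MaxEntropy

open Finset Real InformationTheory

variable {α κ : Type*} {s : Finset α}

/-- Shannon entropy, in nats, of the weights `p` on the finite set `s`. -/
noncomputable def shannonEntropy (s : Finset α) (p : α → ℝ) : ℝ :=
  -∑ x ∈ s, p x * log (p x)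

/-- The partition function of the energy `E` on the finite set `s`, at inverse temperature one: the
normalizing constant of `gibbsDistribution`. -/
noncomputable def partitionFunction (s : Finset α) (E : α → ℝ) : ℝ :=
  ∑ x ∈ s, exp (-E x)

/-- The Gibbs distribution on `s` with energy `E`. An exponential family is obtained by letting `E`
range over the linear combinations of given statistics. Only the values on `s` are meaningful; the
formula is used off `s` too, where it need not vanish. -/
noncomputable def gibbsDistribution (s : Finset α) (E : α → ℝ) (x : α) : ℝ :=
  exp (-E x) / partitionFunction s E

lemma mul_klFun_div (a : ℝ) {b : ℝ} (hb : b ≠ 0) :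
    b * klFun (a / b) = a * log a - a * log b + (b - a) := by
  rw [klFun_apply]
  rcases eq_or_ne a 0 with rfl | ha
  · simp
  · rw [log_div ha hb]
    field_simp
    ring

theorem eq_of_sum_mul_log_le_sum_mul_log {p q : α → ℝ} (hp : ∀ x ∈ s, 0 ≤ p x)
    (hq : ∀ x ∈ s, 0 < q x) (hmass : ∑ x ∈ s, q x ≤ ∑ x ∈ s, p x)
    (hlog : ∑ x ∈ s, p x * log (p x) ≤ ∑ x ∈ s, p x * log (q x)) :
    ∀ x ∈ s, p x = q x := by
  have hratio : ∀ x ∈ s, 0 ≤ p x / q x := fun x hx => div_nonneg (hp x hx) (hq x hx).le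
  have hterm : ∀ x ∈ s, 0 ≤ q x * klFun (p x / q x) := fun x hx =>
    mul_nonneg (hq x hx).le (klFun_nonneg (hratio x hx))
  have hdiv : ∑ x ∈ s, q x * klFun (p x / q x) ≤ 0 := by
    rw [sum_congr rfl fun x hx => mul_klFun_div (p x) (hq x hx).ne', sum_add_distrib,
      sum_sub_distrib, sum_sub_distrib]
    linarith
  intro x hx
  have hzero : q x * klFun (p x / q x) = 0 :=
    (sum_eq_zero_iff_of_nonneg hterm).1 (hdiv.antisymm (sum_nonneg hterm)) x hx
  have hkl : klFun (p x / q x) = 0 := (mul_eq_zero.1 hzero).resolve_left (hq x hx).ne'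
  exact (div_eq_one_iff_eq (hq x hx).ne').1 ((klFun_eq_zero_iff (hratio x hx)).1 hkl)

lemma partitionFunction_pos (hs : s.Nonempty) (E : α → ℝ) : 0 < partitionFunction s E :=
  sum_pos (fun _ _ => exp_pos _) hs

lemma gibbsDistribution_pos (hs : s.Nonempty) (E : α → ℝ) (x : α) :
    0 < gibbsDistribution s E x :=
  div_pos (exp_pos _) (partitionFunction_pos hs E)

lemma sum_gibbsDistribution (hs : s.Nonempty) (E : α → ℝ) :
    ∑ x ∈ s, gibbsDistribution s E x = 1 := by
  simp only [gibbsDistribution]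
  rw [← sum_div]
  exact div_self (partitionFunction_pos hs E).ne'

lemma log_gibbsDistribution (hs : s.Nonempty) (E : α → ℝ) (x : α) :
    log (gibbsDistribution s E x) = -E x - log (partitionFunction s E) := by
  rw [gibbsDistribution, log_div (exp_ne_zero _) (partitionFunction_pos hs E).ne', log_exp]

lemma sum_mul_log_gibbsDistribution (hs : s.Nonempty) (E p : α → ℝ) :
    ∑ x ∈ s, p x * log (gibbsDistribution s E x) =
      -∑ x ∈ s, E x * p x - log (partitionFunction s E) * ∑ x ∈ s, p x := by
  rw [mul_sum, ← sum_neg_distrib, ← sum_sub_distrib]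
  refine sum_congr rfl fun x _ => ?_
  rw [log_gibbsDistribution hs]
  ring

theorem eq_gibbsDistribution_of_energy_le_of_entropy_le {E p : α → ℝ}
    (hp : ∀ x ∈ s, 0 ≤ p x) (hp_sum : ∑ x ∈ s, p x = 1)
    (henergy : ∑ x ∈ s, E x * p x ≤ ∑ x ∈ s, E x * gibbsDistribution s E x)
    (hentropy : shannonEntropy s (gibbsDistribution s E) ≤ shannonEntropy s p) :
    ∀ x ∈ s, p x = gibbsDistribution s E x := by
  have hs : s.Nonempty := nonempty_of_sum_ne_zero (hp_sum ▸ one_ne_zero)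
  have hq_sum := sum_gibbsDistribution hs E
  refine eq_of_sum_mul_log_le_sum_mul_log hp (fun x _ => gibbsDistribution_pos hs E x)
    (hq_sum.trans hp_sum.symm).le ?_
  calc ∑ x ∈ s, p x * log (p x)
      ≤ ∑ x ∈ s, gibbsDistribution s E x * log (gibbsDistribution s E x) :=
        neg_le_neg_iff.1 hentropy
    _ ≤ ∑ x ∈ s, p x * log (gibbsDistribution s E x) := by
        rw [sum_mul_log_gibbsDistribution hs, sum_mul_log_gibbsDistribution hs, hp_sum, hq_sum]
        linarith

lemma sum_linearCombination_mul [Fintype κ] (l : κ → ℝ) (T : κ → α → ℝ) (p : α → ℝ) :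
    ∑ x ∈ s, (∑ k, l k * T k x) * p x = ∑ k, l k * ∑ x ∈ s, T k x * p x := by
  simp only [sum_mul, mul_sum, mul_assoc]
  exact sum_comm

theorem maxEntropy_exponentialFamily_unique_general [Fintype κ] (l : κ → ℝ) (T : κ → α → ℝ)
    {g : α → ℝ} (hg_nonneg : ∀ x ∈ s, 0 ≤ g x) (hg_sum : ∑ x ∈ s, g x = 1)
    (hmom : ∀ k, ∑ x ∈ s, T k x * g x =
      ∑ x ∈ s, T k x * gibbsDistribution s (fun y => ∑ j, l j * T j y) x)
    (hent : shannonEntropy s (gibbsDistribution s fun y => ∑ j, l j * T j y) ≤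
      shannonEntropy s g) :
    ∀ x ∈ s, g x = gibbsDistribution s (fun y => ∑ j, l j * T j y) x := by
  refine eq_gibbsDistribution_of_energy_le_of_entropy_le hg_nonneg hg_sum (le_of_eq ?_) hent
  simp only [sum_linearCombination_mul, hmom]

end MaxEntropy

/-- Uniqueness part of the maximum entropy principle: a probability mass function `g`
on a nonempty finite set `S ⊆ ℕ` satisfying the same moment constraints as the
exponential-family distribution `q` and having the same Shannon entropy must equal `q`
on `S`. -/
theorem maxEntropy_exponentialFamily_unique
    (S : Finset ℕ) (hS : S.Nonempty) (M : ℕ) (hM : 0 < M)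
    (l : Fin M → ℝ)
    (Z : ℝ)
    (hZ : Z = ∑ x ∈ S, Real.exp (-∑ k : Fin M, l k * (x : ℝ) ^ (k.1 + 1)))
    (q : ℕ → ℝ)
    (hq : ∀ x : ℕ, q x = Real.exp (-∑ k : Fin M, l k * (x : ℝ) ^ (k.1 + 1)) / Z)
    (g : ℕ → ℝ)
    (hg_nonneg : ∀ x ∈ S, 0 ≤ g x)
    (hg_sum : ∑ x ∈ S, g x = 1)
    (hmom : ∀ k : Fin M,
      ∑ x ∈ S, (x : ℝ) ^ (k.1 + 1) * g x = ∑ x ∈ S, (x : ℝ) ^ (k.1 + 1) * q x)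
    (hent : -∑ x ∈ S, g x * Real.log (g x) = -∑ x ∈ S, q x * Real.log (q x)) :
    ∀ x ∈ S, g x = q x := by
  obtain rfl : q = gibbsDistribution S fun x => ∑ k : Fin M, l k * (x : ℝ) ^ (k.1 + 1) :=
    funext fun x => (hq x).trans (by rw [hZ]; rfl)
  exact maxEntropy_exponentialFamily_unique_general l _ hg_nonneg hg_sum hmom hent.ge
end

section
/- Let S be a finite set of natural numbers with at least M+1 elements, where M is a positive integer, and let μ_1, …, μ_M ∈ ℝ. Then the dual function Ψ(λ) = ln (∑_{x∈S} exp(−∑_{k=1}^M λ_k x^k)) + ∑_{k=1}^M λ_k μ_k is strictly convex on ℝ^M; consequently, Ψ has at most one global minimizer. -/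
/-!
The log-sum-exp function is convex, and strictly so along every segment whose direction is not
constant on the index set: after subtracting from each endpoint its own log-sum-exp, both
exponential sums equal `1`, and the strict convexity of `exp` is felt at any index where the
normalized endpoints differ. The dual function is log-sum-exp composed with the linear map
`λ ↦ (-∑ k, λ k * x ^ k)_x`, plus a linear form. A direction sent to a constant by this map is a
polynomial of degree at most `M` taking a single value at more than `M` nodes, so by the
nonvanishing of the Vandermonde determinant it is zero.
-/

open Finset Real

section LogSumExp

variable {ι : Type*} {s : Finset ι} {u v : ι → ℝ} {a b : ℝ}

/-- The log-sum-exp function `log (∑ i ∈ s, exp (u i))` of a family `u` over a finite index set,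
which is the log-partition function of the Gibbs distribution with weights `exp (u i)`. For
`s = ∅` it takes the junk value `log 0 = 0`. -/
noncomputable def logSumExp (s : Finset ι) (u : ι → ℝ) : ℝ :=
  log (∑ i ∈ s, exp (u i))

theorem sum_exp_sub_eq_exp_logSumExp_sub (hs : s.Nonempty) (u : ι → ℝ) (c : ℝ) :
    ∑ i ∈ s, exp (u i - c) = exp (logSumExp s u - c) := by
  have sum_pos : 0 < ∑ i ∈ s, exp (u i) := Finset.sum_pos (fun i _ ↦ exp_pos (u i)) hs
  simp only [logSumExp, exp_sub, exp_log sum_pos, Finset.sum_div]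

theorem sum_exp_sub_logSumExp (hs : s.Nonempty) (u : ι → ℝ) :
    ∑ i ∈ s, exp (u i - logSumExp s u) = 1 := by
  rw [sum_exp_sub_eq_exp_logSumExp_sub hs, sub_self, exp_zero]

theorem logSumExp_lt_iff (hs : s.Nonempty) {c : ℝ} :
    logSumExp s u < c ↔ ∑ i ∈ s, exp (u i - c) < 1 := by
  rw [sum_exp_sub_eq_exp_logSumExp_sub hs, exp_lt_one_iff, sub_neg]

theorem sum_exp_convexCombo_lt (huv : ∃ i ∈ s, u i ≠ v i) (ha : 0 < a) (hb : 0 < b)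
    (hab : a + b = 1) :
    ∑ i ∈ s, exp (a * u i + b * v i) < a * ∑ i ∈ s, exp (u i) + b * ∑ i ∈ s, exp (v i) := by
  obtain ⟨j, hj, hne⟩ := huv
  rw [Finset.mul_sum, Finset.mul_sum, ← Finset.sum_add_distrib]
  refine Finset.sum_lt_sum (fun i _ ↦ ?_) ⟨j, hj, ?_⟩
  · exact convexOn_exp.2 (Set.mem_univ _) (Set.mem_univ _) ha.le hb.le hab
  · exact strictConvexOn_exp.2 (Set.mem_univ _) (Set.mem_univ _) hne ha hb hab

theorem logSumExp_convexCombo_lt (huv : ∀ c, ∃ i ∈ s, u i - v i ≠ c) (ha : 0 < a) (hb : 0 < b)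
    (hab : a + b = 1) :
    logSumExp s (a • u + b • v) < a * logSumExp s u + b * logSumExp s v := by
  have hs : s.Nonempty := (huv 0).imp fun _ h ↦ h.1
  set A := logSumExp s u with hA
  set B := logSumExp s v with hB
  have normalized_ne : ∃ i ∈ s, u i - A ≠ v i - B := by
    obtain ⟨i, hi, hne⟩ := huv (A - B)
    exact ⟨i, hi, fun h ↦ hne (sub_eq_sub_iff_sub_eq_sub.1 h)⟩
  rw [logSumExp_lt_iff hs]
  calc ∑ i ∈ s, exp ((a • u + b • v) i - (a * A + b * B))
      = ∑ i ∈ s, exp (a * (u i - A) + b * (v i - B)) := by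
        refine Finset.sum_congr rfl fun i _ ↦ congrArg exp ?_
        simp only [Pi.add_apply, Pi.smul_apply, smul_eq_mul]
        ring
    _ < a * ∑ i ∈ s, exp (u i - A) + b * ∑ i ∈ s, exp (v i - B) :=
        sum_exp_convexCombo_lt normalized_ne ha hb hab
    _ = 1 := by
        rw [hA, hB, sum_exp_sub_logSumExp hs, sum_exp_sub_logSumExp hs, mul_one, mul_one, hab]

theorem strictConvexOn_logSumExp_comp_linearMap {E : Type*} [AddCommGroup E] [Module ℝ E]
    (L : E →ₗ[ℝ] ι → ℝ) (hL : ∀ d ≠ 0, ∀ c, ∃ i ∈ s, L d i ≠ c) :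
    StrictConvexOn ℝ Set.univ fun l ↦ logSumExp s (L l) := by
  refine ⟨convex_univ, fun l _ m _ hlm a b ha hb hab ↦ ?_⟩
  have difference_ne : ∀ c, ∃ i ∈ s, L l i - L m i ≠ c := by
    simpa only [map_sub, Pi.sub_apply] using hL (l - m) (sub_ne_zero.2 hlm)
  simpa only [map_add, map_smul, smul_eq_mul] using
    logSumExp_convexCombo_lt difference_ne ha hb hab

end LogSumExp

section PolynomialInterpolation

variable {ι R : Type*} [CommRing R] [IsDomain R] {s : Finset ι} {x : ι → R} {n : ℕ}

theorem eq_zero_of_sum_mul_pow_eq_zero_of_le_card (hx : Set.InjOn x s) (hn : n ≤ #s)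
    {d : Fin n → R} (hd : ∀ i ∈ s, ∑ k : Fin n, d k * x i ^ (k : ℕ) = 0) : d = 0 := by
  obtain ⟨node⟩ : Nonempty (Fin n ↪ s) :=
    Function.Embedding.nonempty_of_card_le (by simpa using hn)
  exact Matrix.eq_zero_of_forall_index_sum_mul_pow_eq_zero
    (hx.injective.comp node.injective) fun j ↦ hd (node j) (node j).2

theorem exists_sum_mul_pow_succ_ne_of_lt_card (hx : Set.InjOn x s) (hn : n < #s)
    {d : Fin n → R} (hd : d ≠ 0) (c : R) :
    ∃ i ∈ s, ∑ k : Fin n, d k * x i ^ ((k : ℕ) + 1) ≠ c := by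
  by_contra! hconst
  have cons_eq_zero : (Fin.cons (-c) d : Fin (n + 1) → R) = 0 :=
    eq_zero_of_sum_mul_pow_eq_zero_of_le_card hx hn fun i hi ↦ by
      simp [Fin.sum_univ_succ, hconst i hi]
  exact hd (funext fun k ↦ by simpa using congrFun cons_eq_zero k.succ)

end PolynomialInterpolation

theorem dualFunction_strictConvexOn_of_card_general {ι : Type*} {s : Finset ι} {x : ι → ℝ}
    (hx : Set.InjOn x s) {M : ℕ} (hcard : M + 1 ≤ #s) (μ : Fin M → ℝ) (Ψ : (Fin M → ℝ) → ℝ)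
    (hΨ : ∀ l : Fin M → ℝ,
      Ψ l = log (∑ i ∈ s, exp (-∑ k : Fin M, l k * x i ^ (k.1 + 1))) + ∑ k : Fin M, l k * μ k) :
    StrictConvexOn ℝ Set.univ Ψ ∧
      ∀ a b : Fin M → ℝ,
        (∀ l : Fin M → ℝ, Ψ a ≤ Ψ l) → (∀ l : Fin M → ℝ, Ψ b ≤ Ψ l) → a = b := by
  let energy : (Fin M → ℝ) →ₗ[ℝ] ι → ℝ :=
    Fintype.linearCombination ℝ fun k i ↦ x i ^ (k.1 + 1)
  let pairing : (Fin M → ℝ) →ₗ[ℝ] ℝ := Fintype.linearCombination ℝ μ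
  have energy_apply (l : Fin M → ℝ) (i : ι) : energy l i = ∑ k, l k * x i ^ (k.1 + 1) := by
    simp [energy, Fintype.linearCombination_apply]
  have dual_eq : Ψ = (fun l ↦ logSumExp s ((-energy) l)) + pairing := by
    funext l
    simp [hΨ, logSumExp, energy_apply, pairing, Fintype.linearCombination_apply]
  have energy_ne (d : Fin M → ℝ) (hd : d ≠ 0) (c : ℝ) : ∃ i ∈ s, (-energy) d i ≠ c := by
    simpa [energy_apply, neg_eq_iff_eq_neg] using
      exists_sum_mul_pow_succ_ne_of_lt_card hx hcard hd (-c)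
  have dual_strictConvexOn : StrictConvexOn ℝ Set.univ Ψ := by
    rw [dual_eq]
    exact (strictConvexOn_logSumExp_comp_linearMap (-energy) energy_ne).add_convexOn
      (pairing.convexOn convex_univ)
  exact ⟨dual_strictConvexOn, fun a b ha hb ↦ dual_strictConvexOn.eq_of_isMinOn
    (fun l _ ↦ ha l) (fun l _ ↦ hb l) (Set.mem_univ a) (Set.mem_univ b)⟩

/-- If the finite support `S ⊆ ℕ` has at least `M + 1` elements, then the dual
function `Ψ` is strictly convex on `ℝ^M`; consequently it has at most one global
minimizer. -/
theorem dualFunction_strictConvexOn_of_card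
    (S : Finset ℕ) (M : ℕ) (hM : 0 < M) (hcard : M + 1 ≤ S.card)
    (μ : Fin M → ℝ)
    (Ψ : (Fin M → ℝ) → ℝ)
    (hΨ : ∀ l : Fin M → ℝ,
      Ψ l = Real.log (∑ x ∈ S, Real.exp (-∑ k : Fin M, l k * (x : ℝ) ^ (k.1 + 1)))
              + ∑ k : Fin M, l k * μ k) :
    StrictConvexOn ℝ Set.univ Ψ ∧
      ∀ a b : Fin M → ℝ,
        (∀ l : Fin M → ℝ, Ψ a ≤ Ψ l) → (∀ l : Fin M → ℝ, Ψ b ≤ Ψ l) → a = b :=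
  dualFunction_strictConvexOn_of_card_general Nat.cast_injective.injOn hcard μ Ψ hΨ
end

section
/- Let f : ℝ → ℝ be a nonnegative measurable probability density (∫_ℝ f(x) dx = 1) with finite mean μ = ∫_ℝ x f(x) dx and finite variance σ² = ∫_ℝ (x − μ)² f(x) dx, where σ² > 0, and suppose the differential entropy −∫_ℝ f(x) ln f(x) dx is well defined. Then −∫_ℝ f(x) ln f(x) dx ≤ (1/2) ln(2π e σ²), with equality attained by the Gaussian density with mean μ and variance σ². In other words, when the first two moments (mean and variance) are provided, the maximum entropy reconstruction is given by the normal distribution. -/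
open MeasureTheory Real

/-!
Let `g` be the Gaussian density of mean `μ` and variance `v`. Integrating
`f log g + (f - g) ≤ f log f`, which is `log t ≤ t - 1` at `t = g / f`, bounds the entropy of `f` by
the cross entropy `-∫ f log g`. Since `log g` is a quadratic polynomial in `x - μ`, this cross
entropy depends on `f` only through its mass and its second moment about `μ`, so it takes the same
value at `f` as at `g` itself, where it is the entropy of `g`.
-/

open ProbabilityTheory

open scoped NNReal

section Entropy

variable {α : Type*} {mα : MeasurableSpace α} {ν : Measure α} {p q : α → ℝ}

/-- The cross entropy `-∫ p log q dν` of the density `p` relative to the density `q`. It is real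
valued, so it is meaningful only when `p log q` is integrable. -/
noncomputable def crossEntropy (p q : α → ℝ) (ν : Measure α) : ℝ :=
  -∫ x, p x * log (q x) ∂ν

/-- The differential entropy `-∫ p log p dν` of the density `p` with respect to `ν`. It is real
valued, so it is meaningful only when `p log p` is integrable. -/
noncomputable def differentialEntropy (p : α → ℝ) (ν : Measure α) : ℝ :=
  -∫ x, p x * log (p x) ∂ν

lemma crossEntropy_self (p : α → ℝ) (ν : Measure α) :
    crossEntropy p p ν = differentialEntropy p ν :=
  rfl

lemma mul_log_add_sub_le_mul_log {a b : ℝ} (ha : 0 ≤ a) (hb : 0 ≤ b) (hab : b = 0 → a = 0) :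
    a * log b + (a - b) ≤ a * log a := by
  rcases ha.eq_or_lt with rfl | ha
  · simpa using hb
  have hb : 0 < b := hb.lt_of_ne' fun h ↦ ha.ne' (hab h)
  have log_div_le : log b - log a ≤ b / a - 1 := by
    simpa only [log_div hb.ne' ha.ne'] using log_le_sub_one_of_pos (div_pos hb ha)
  have mul_log_div_le : a * (log b - log a) ≤ b - a := calc
    a * (log b - log a) ≤ a * (b / a - 1) := by gcongr
    _ = b - a := by field_simp
  linarith

theorem differentialEntropy_le_crossEntropy
    (hp : Integrable p ν) (hq : Integrable q ν)
    (hp_nonneg : 0 ≤ᵐ[ν] p) (hq_nonneg : 0 ≤ᵐ[ν] q) (hpq : ∀ᵐ x ∂ν, q x = 0 → p x = 0)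
    (h_mass : ∫ x, q x ∂ν ≤ ∫ x, p x ∂ν)
    (h_ent : Integrable (fun x ↦ p x * log (p x)) ν)
    (h_cross : Integrable (fun x ↦ p x * log (q x)) ν) :
    differentialEntropy p ν ≤ crossEntropy p q ν := by
  have h_sub : Integrable (fun x ↦ p x - q x) ν := hp.sub hq
  refine neg_le_neg ?_
  calc ∫ x, p x * log (q x) ∂ν
      ≤ ∫ x, p x * log (q x) ∂ν + (∫ x, p x ∂ν - ∫ x, q x ∂ν) :=
        le_add_of_nonneg_right (sub_nonneg.2 h_mass)
    _ = ∫ x, (p x * log (q x) + (p x - q x)) ∂ν := by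
        rw [integral_add h_cross h_sub, integral_sub hp hq]
    _ ≤ ∫ x, p x * log (p x) ∂ν := by
        refine integral_mono_ae (h_cross.add h_sub) h_ent ?_
        filter_upwards [hp_nonneg, hq_nonneg, hpq] with x hpx hqx hpqx
        exact mul_log_add_sub_le_mul_log hpx hqx hpqx

end Entropy

section Gaussian

variable {ν : Measure ℝ} {p : ℝ → ℝ} {v : ℝ≥0}

lemma log_gaussianPDFReal (μ : ℝ) (hv : v ≠ 0) (x : ℝ) :
    log (gaussianPDFReal μ v x) = -(log (2 * π * v) / 2) - (x - μ) ^ 2 / (2 * v) := by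
  have two_pi_v_pos : 0 < 2 * π * v := by positivity
  rw [gaussianPDFReal_def, log_mul (by positivity) (exp_ne_zero _), log_inv, log_exp,
    log_sqrt two_pi_v_pos.le]
  ring

lemma mul_log_gaussianPDFReal (μ : ℝ) (hv : v ≠ 0) (a x : ℝ) :
    a * log (gaussianPDFReal μ v x) =
      -(log (2 * π * v) / 2) * a - (2 * v : ℝ)⁻¹ * ((x - μ) ^ 2 * a) := by
  rw [log_gaussianPDFReal μ hv]
  ring

lemma integrable_mul_log_gaussianPDFReal {μ : ℝ} (hv : v ≠ 0) (hp : Integrable p ν)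
    (hp_sq : Integrable (fun x ↦ (x - μ) ^ 2 * p x) ν) :
    Integrable (fun x ↦ p x * log (gaussianPDFReal μ v x)) ν := by
  simp only [mul_log_gaussianPDFReal μ hv]
  exact (hp.const_mul _).sub (hp_sq.const_mul _)

lemma crossEntropy_gaussianPDFReal {μ : ℝ} (hv : v ≠ 0) (hp : Integrable p ν)
    (hp_sq : Integrable (fun x ↦ (x - μ) ^ 2 * p x) ν) :
    crossEntropy p (gaussianPDFReal μ v) ν =
      log (2 * π * v) / 2 * ∫ x, p x ∂ν + (∫ x, (x - μ) ^ 2 * p x ∂ν) / (2 * v) := by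
  simp only [crossEntropy, mul_log_gaussianPDFReal μ hv]
  rw [integral_sub (hp.const_mul _) (hp_sq.const_mul _), integral_const_mul, integral_const_mul]
  ring

lemma integral_sub_sq_mul_gaussianPDFReal (μ : ℝ) (hv : v ≠ 0) :
    ∫ x, (x - μ) ^ 2 * gaussianPDFReal μ v x = v := by
  have variance_eq := variance_fun_id_gaussianReal (μ := μ) (v := v)
  rw [variance_eq_integral (by fun_prop), integral_id_gaussianReal,
    integral_gaussianReal_eq_integral_smul hv] at variance_eq
  simpa only [smul_eq_mul, mul_comm] using variance_eq

lemma integrable_sub_sq_mul_gaussianPDFReal (μ : ℝ) (hv : v ≠ 0) :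
    Integrable (fun x ↦ (x - μ) ^ 2 * gaussianPDFReal μ v x) :=
  .of_integral_ne_zero <| by
    rw [integral_sub_sq_mul_gaussianPDFReal μ hv]
    exact_mod_cast hv

lemma half_mul_log_two_pi_exp_one_mul {r : ℝ} (hr : r ≠ 0) :
    1 / 2 * log (2 * π * exp 1 * r) = log (2 * π * r) / 2 + 1 / 2 := by
  rw [mul_right_comm, log_mul (by positivity) (exp_ne_zero 1), log_exp]
  ring

theorem differentialEntropy_gaussianPDFReal (μ : ℝ) (hv : v ≠ 0) :
    differentialEntropy (gaussianPDFReal μ v) volume = 1 / 2 * log (2 * π * exp 1 * v) := by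
  rw [← crossEntropy_self, crossEntropy_gaussianPDFReal hv (integrable_gaussianPDFReal μ v)
    (integrable_sub_sq_mul_gaussianPDFReal μ hv), integral_gaussianPDFReal_eq_one μ hv,
    integral_sub_sq_mul_gaussianPDFReal μ hv,
    half_mul_log_two_pi_exp_one_mul (NNReal.coe_ne_zero.2 hv)]
  field_simp

lemma crossEntropy_gaussianPDFReal_le {μ : ℝ} (hv : v ≠ 0) (hp : Integrable p ν)
    (hp_one : ∫ x, p x ∂ν = 1) (hp_sq : Integrable (fun x ↦ (x - μ) ^ 2 * p x) ν)
    (hp_sq_le : ∫ x, (x - μ) ^ 2 * p x ∂ν ≤ v) :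
    crossEntropy p (gaussianPDFReal μ v) ν ≤ 1 / 2 * log (2 * π * exp 1 * v) := by
  rw [crossEntropy_gaussianPDFReal hv hp hp_sq, hp_one, mul_one,
    half_mul_log_two_pi_exp_one_mul (NNReal.coe_ne_zero.2 hv)]
  refine add_le_add_right ?_ _
  calc (∫ x, (x - μ) ^ 2 * p x ∂ν) / (2 * v) ≤ v / (2 * v) := by gcongr
    _ = 1 / 2 := by field_simp

end Gaussian

theorem maxEntropy_gaussian_density_general {f : ℝ → ℝ} {μ : ℝ} {v : ℝ≥0} (hv : v ≠ 0)
    (hf_nonneg : 0 ≤ᵐ[volume] f) (hf_int : Integrable f) (hf_one : ∫ x, f x = 1)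
    (hsq_int : Integrable (fun x ↦ (x - μ) ^ 2 * f x)) (hsq_le : ∫ x, (x - μ) ^ 2 * f x ≤ v)
    (hent_int : Integrable (fun x ↦ f x * log (f x))) :
    differentialEntropy f volume ≤ 1 / 2 * log (2 * π * exp 1 * v) ∧
      differentialEntropy (gaussianPDFReal μ v) volume = 1 / 2 * log (2 * π * exp 1 * v) := by
  refine ⟨?_, differentialEntropy_gaussianPDFReal μ hv⟩
  have gaussian_pos (x : ℝ) : 0 < gaussianPDFReal μ v x := gaussianPDFReal_pos μ v x hv
  calc differentialEntropy f volume
      ≤ crossEntropy f (gaussianPDFReal μ v) volume :=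
        differentialEntropy_le_crossEntropy hf_int (integrable_gaussianPDFReal μ v) hf_nonneg
          (.of_forall fun x ↦ (gaussian_pos x).le)
          (.of_forall fun x h ↦ absurd h (gaussian_pos x).ne')
          (by rw [integral_gaussianPDFReal_eq_one μ hv, hf_one]) hent_int
          (integrable_mul_log_gaussianPDFReal hv hf_int hsq_int)
    _ ≤ 1 / 2 * log (2 * π * exp 1 * v) :=
        crossEntropy_gaussianPDFReal_le hv hf_int hf_one hsq_int hsq_le

/-- Maximum entropy with mean and variance constraints on `ℝ`: any probability
density `f` on `ℝ` with mean `μ`, variance `σ² > 0` and well-defined differential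
entropy satisfies `h(f) ≤ (1/2) ln(2πeσ²)`, and the Gaussian density with mean `μ`
and variance `σ²` attains this bound. -/
theorem maxEntropy_gaussian_density
    (f : ℝ → ℝ) (μ v : ℝ) (hv : 0 < v)
    (hf_meas : Measurable f)
    (hf_nonneg : ∀ x : ℝ, 0 ≤ f x)
    (hf_int : Integrable f)
    (hf_one : ∫ x : ℝ, f x = 1)
    (hmean_int : Integrable (fun x => x * f x))
    (hmean : ∫ x : ℝ, x * f x = μ)
    (hvar_int : Integrable (fun x => (x - μ) ^ 2 * f x))
    (hvar : ∫ x : ℝ, (x - μ) ^ 2 * f x = v)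
    (hent_int : Integrable (fun x => f x * Real.log (f x))) :
    (-∫ x : ℝ, f x * Real.log (f x) ≤ (1 / 2) * Real.log (2 * π * Real.exp 1 * v)) ∧
      (-∫ x : ℝ,
          ((Real.sqrt (2 * π * v))⁻¹ * Real.exp (-(x - μ) ^ 2 / (2 * v)))
            * Real.log ((Real.sqrt (2 * π * v))⁻¹ * Real.exp (-(x - μ) ^ 2 / (2 * v)))
        = (1 / 2) * Real.log (2 * π * Real.exp 1 * v)) := by
  lift v to ℝ≥0 using hv.le
  exact maxEntropy_gaussian_density_general (NNReal.coe_pos.1 hv).ne' (.of_forall hf_nonneg) hf_int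
    hf_one hvar_int hvar.le hent_int
end
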